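/- Let m = 2^k with k ≥ 1 and let v be any allowed m-word of the period-doubling sequence. Then exactly one of the following holds: (1) v is the subword of length m of the concatenation 0^(m)1^(m) starting at the i-th letter for some i ≤ m; (2) v is the subword of length m of the concatenation 1^(m)0^(m) starting at the i-th letter for some i ≤ m/2. -/

import Mathlib

/-!
Since `ω` is fixed by the substitution, `ζ^k` maps the word of length `l` at position `n + 1` to the
word of length `2^k l` at position `2^k n + 1`. With `ω₁ω₂ω₃ = 010` this gives
`0^(m)1^(m) = ω₁ ⋯ ω_{2m}` and `1^(m)0^(m) = ω_{m+1} ⋯ ω_{3m}`, so alternative (1) says that `v` is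
the word at some `i` with `1 ≤ i ≤ m`, and alternative (2) that it is the word at some `m + i` with
`1 ≤ i ≤ m / 2`.

Existence: a window of length `m` contains exactly one multiple of `m`, and `ω` at the other
positions depends only on their residue mod `m`. Hence `v` is the word at `i` or at `m + i` with
`1 ≤ i ≤ m`, according to the value of `ω` at that multiple. The words at `m + i` and `m + i + m / 2`
agree for `1 ≤ i ≤ m / 2`, because the multiples of `m / 2` involved are `3m/2, 2m` and `2m, 5m/2`,
where `ω` has the same value.

Exclusivity: suppose the words at `i` and at `i + d = m + j` agree, and let `2^e` be the exact power
of two dividing `d`. If `e ≤ k - 2`, the window contains a position `p` with `2^(e+1)` exactly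
dividing `p`, and then `2^e` exactly divides `p + d`, so the letters differ. If `e ≥ k - 1`, the size
bounds force `d = m / 2` or `d = m`, and the letters at `m` and `m + d` differ.
-/

open Filter Topology

/-- The period-doubling sequence (1-based): `pd i = k_i mod 2` where `k_i` is the
largest `k` such that `2^k` divides `i`. -/
def pd (i : ℕ) : ℕ := padicValNat 2 i % 2

/-- The `m`-word `w_i^(m) = ω_i ω_{i+1} ⋯ ω_{i+m-1}` of the period-doubling sequence. -/
def wordAt (i m : ℕ) : List ℕ := (List.range m).map (fun h => pd (i + h))

/-- An `m`-word is allowed if it occurs in the period-doubling sequence. -/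
def Allowed (m : ℕ) (v : List ℕ) : Prop := ∃ i, 1 ≤ i ∧ wordAt i m = v

/-- The complexity function of the period-doubling sequence. -/
noncomputable def pdComplexity (m : ℕ) : ℕ := Set.ncard {v | Allowed m v}

/-- `HasFreq m v c`: the frequency of the `m`-word `v` in the period-doubling
sequence exists and equals `c`. -/
def HasFreq (m : ℕ) (v : List ℕ) (c : ℝ) : Prop :=
  Tendsto (fun n : ℕ => (((Finset.Icc 1 n).filter (fun i => wordAt i m = v)).card : ℝ) / n)
    atTop (𝓝 c)

open Classical in
/-- The correlation sum `C(ω, n, m)` of the period-doubling sequence, for a distance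
threshold `ε` with `2^{-m} ≤ ε < 2^{-m+1}`. -/
noncomputable def corrSum (n m : ℕ) : ℝ :=
  (((Finset.range n ×ˢ Finset.range n).filter
      (fun p : ℕ × ℕ => ∀ h ∈ Finset.Icc 1 m, pd (p.1 + h) = pd (p.2 + h))).card : ℝ) / (n : ℝ) ^ 2

/-- The period-doubling substitution `ζ(0) = 01`, `ζ(1) = 00`, extended to a morphism
on finite words. -/
def substWord (w : List ℕ) : List ℕ := (w.map (fun a => if a = 0 then [0, 1] else [0, 0])).flatten

/-- The period-doubling substitution acting on one-sided infinite sequences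
(0-based indexing). -/
def substSeq (x : ℕ → ℕ) : ℕ → ℕ := fun n =>
  if n % 2 = 0 then 0 else if x (n / 2) = 0 then 1 else 0

lemma pd_two_pow_mul (a b : ℕ) : pd (2 ^ a * (2 * b + 1)) = a % 2 := by
  unfold pd
  rw [padicValNat.mul (by positivity) (by omega), padicValNat.prime_pow,
    padicValNat.eq_zero_of_not_dvd (by omega), add_zero]

lemma exists_two_pow_mul (p : ℕ) (hp : 1 ≤ p) : ∃ a b, p = 2 ^ a * (2 * b + 1) := by
  obtain ⟨a, c, ⟨b, rfl⟩, h⟩ := Nat.exists_eq_two_pow_mul_odd (n := p) (by omega)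
  exact ⟨a, b, h⟩

lemma pd_odd (n : ℕ) : pd (2 * n + 1) = 0 := by
  simpa using pd_two_pow_mul 0 n

lemma pd_lt (n : ℕ) : pd n < 2 := Nat.mod_lt _ (by norm_num)

lemma pd_two_pow_mul_eq (k n : ℕ) (hn : 1 ≤ n) : pd (2 ^ k * n) = (k + pd n) % 2 := by
  obtain ⟨a, b, rfl⟩ := exists_two_pow_mul n hn
  rw [← mul_assoc, ← pow_add, pd_two_pow_mul, pd_two_pow_mul]
  omega

/-- Away from the multiples of `2^k`, the sequence is `2^k`-periodic. -/
lemma pd_add_of_not_dvd (k p c : ℕ) (hp : ¬ 2 ^ k ∣ p) : pd (p + 2 ^ k * c) = pd p := by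
  have hp1 : 1 ≤ p := by
    by_contra h
    exact hp (by simp [show p = 0 by omega])
  obtain ⟨a, b, rfl⟩ := exists_two_pow_mul p hp1
  have hak : a < k := by
    by_contra h
    exact hp ((pow_dvd_pow 2 (by omega)).mul_right _)
  obtain ⟨t, rfl⟩ := Nat.exists_eq_add_of_lt hak
  have : 2 ^ a * (2 * b + 1) + 2 ^ (a + t + 1) * c = 2 ^ a * (2 * (b + 2 ^ t * c) + 1) := by
    ring
  rw [this, pd_two_pow_mul, pd_two_pow_mul]

lemma wordAt_eq_iff (i j m : ℕ) :
    wordAt i m = wordAt j m ↔ ∀ h < m, pd (i + h) = pd (j + h) := by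
  simp [wordAt]

lemma wordAt_append (i a b : ℕ) : wordAt i a ++ wordAt (i + a) b = wordAt i (a + b) := by
  simp [wordAt, List.range_add, Function.comp_def, add_assoc]

lemma wordAt_drop_take (n l a m : ℕ) (h : a + m ≤ l) :
    ((wordAt n l).drop a).take m = wordAt (n + a) m := by
  apply List.ext_getElem
  · simp [wordAt]; omega
  · intro i h1 h2
    simp [wordAt, add_assoc]

/-- The period-doubling sequence is a fixed point of the substitution, at the level of words. -/
lemma substWord_wordAt (n l : ℕ) : substWord (wordAt (n + 1) l) = wordAt (2 * n + 1) (2 * l) := by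
  induction l with
  | zero => simp [substWord, wordAt]
  | succ l ih =>
    have e1 : wordAt (n + 1) (l + 1) = wordAt (n + 1) l ++ [pd (n + 1 + l)] := by
      simp [wordAt, List.range_succ]
    have e2 : wordAt (2 * n + 1) (2 * (l + 1)) =
        wordAt (2 * n + 1) (2 * l) ++ [pd (2 * (n + l) + 1), pd (2 ^ 1 * (n + 1 + l))] := by
      rw [mul_add, ← wordAt_append]
      simp [wordAt, List.range_succ]
      constructor <;> congr 1 <;> ring
    rw [e1, e2, ← ih, pd_odd, pd_two_pow_mul_eq _ _ (by omega)]
    have := pd_lt (n + 1 + l)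
    unfold substWord
    interval_cases pd (n + 1 + l) <;> simp

lemma substWord_iterate_wordAt (k n l : ℕ) :
    substWord^[k] (wordAt (n + 1) l) = wordAt (2 ^ k * n + 1) (2 ^ k * l) := by
  induction k with
  | zero => simp
  | succ k ih =>
    rw [Function.iterate_succ_apply', ih, substWord_wordAt]
    congr 1 <;> ring

lemma concat_zero_one (k : ℕ) :
    substWord^[k] [0] ++ substWord^[k] [1] = wordAt 1 (2 ^ k + 2 ^ k) := by
  have h0 : [0] = wordAt (0 + 1) 1 := by simp [wordAt, pd]
  have h1 : [1] = wordAt (1 + 1) 1 := by simp [wordAt, pd]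
  rw [h0, h1, substWord_iterate_wordAt, substWord_iterate_wordAt, ← wordAt_append]
  simp [add_comm]

lemma concat_one_zero (k : ℕ) :
    substWord^[k] [1] ++ substWord^[k] [0] = wordAt (2 ^ k + 1) (2 ^ k + 2 ^ k) := by
  -- The letter `0` is read off at position `3` here, so that the two blocks are adjacent in `ω`.
  have h0 : [0] = wordAt (2 + 1) 1 := by
    simpa [wordAt] using (pd_odd 1).symm
  have h1 : [1] = wordAt (1 + 1) 1 := by simp [wordAt, pd]
  rw [h0, h1, substWord_iterate_wordAt, substWord_iterate_wordAt, ← wordAt_append]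
  congr 2 <;> ring

/-- Words of length `2^k` at positions congruent mod `2^k` agree as soon as they agree at the unique
multiple of `2^k` in the window. -/
lemma wordAt_congr (k i q r : ℕ) (hi : 1 ≤ i) (him : i ≤ 2 ^ k) (h : pd (q + 1) = pd (r + 1)) :
    wordAt (2 ^ k * q + i) (2 ^ k) = wordAt (2 ^ k * r + i) (2 ^ k) := by
  rw [wordAt_eq_iff]
  intro t ht
  by_cases hd : 2 ^ k ∣ i + t
  · have hs : i + t = 2 ^ k := by
      obtain ⟨c, hc⟩ := hd
      have h2 : c < 2 := by
        by_contra! h2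
        nlinarith
      interval_cases c <;> omega
    rw [add_assoc, add_assoc, hs, ← mul_add_one, ← mul_add_one,
      pd_two_pow_mul_eq _ _ (by omega), pd_two_pow_mul_eq _ _ (by omega), h]
  · rw [show 2 ^ k * q + i + t = i + t + 2 ^ k * q by ring,
      show 2 ^ k * r + i + t = i + t + 2 ^ k * r by ring,
      pd_add_of_not_dvd _ _ _ hd, pd_add_of_not_dvd _ _ _ hd]

/-- Shifting by `m / 2` (here `2^n`, with `m = 2^(n+1)`) inside `1^(m)0^(m)` does not change the
word of length `m`. -/
lemma wordAt_half_shift (n j : ℕ) (hj : 1 ≤ j) (hjm : j ≤ 2 ^ n) :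
    wordAt (2 ^ (n + 1) + (2 ^ n + j)) (2 ^ (n + 1)) = wordAt (2 ^ (n + 1) + j) (2 ^ (n + 1)) := by
  have p3 : pd (2 + 1) = 0 := pd_odd 1
  have p4 : pd (3 + 1) = 0 := by simpa using pd_two_pow_mul 2 0
  have p5 : pd (4 + 1) = 0 := pd_odd 2
  -- Each window is a pair of half-windows of length `2^n`.
  have e : 2 ^ (n + 1) = 2 ^ n + 2 ^ n := by ring
  rw [e, ← wordAt_append, ← wordAt_append]
  have h1 := wordAt_congr n j 3 2 hj hjm (by rw [p3, p4])
  have h2 := wordAt_congr n j 4 3 hj hjm (by rw [p4, p5])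
  rw [show 2 ^ n + 2 ^ n + (2 ^ n + j) = 2 ^ n * 3 + j by ring,
    show 2 ^ n + 2 ^ n + j = 2 ^ n * 2 + j by ring,
    show 2 ^ n * 3 + j + 2 ^ n = 2 ^ n * 4 + j by ring,
    show 2 ^ n * 2 + j + 2 ^ n = 2 ^ n * 3 + j by ring, h2, h1]

/-- Every window of length `2^(e+2)` contains a position exactly divisible by `2^(e+1)`. -/
lemma exists_exact_pow (e i : ℕ) :
    ∃ h < 2 ^ (e + 2), ∃ b, i + h = 2 ^ (e + 1) * (2 * b + 1) := by
  have hM : 2 ^ (e + 2) = 2 * 2 ^ (e + 1) := by ring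
  have hpos : 0 < 2 ^ (e + 1) := by positivity
  set N := 2 ^ (e + 1)
  have hdiv := Nat.div_add_mod i (2 * N)
  have hlt := Nat.mod_lt i (show 2 * N > 0 by omega)
  set q := i / (2 * N)
  set r := i % (2 * N)
  have e1 : N * (2 * q + 1) = 2 * N * q + N := by ring
  have e2 : N * (2 * (q + 1) + 1) = 2 * N * q + 3 * N := by ring
  by_cases hr : r ≤ N
  · exact ⟨N - r, by omega, q, by omega⟩
  · exact ⟨3 * N - r, by omega, q + 1, by omega⟩

lemma wordAt_ne (n i j : ℕ) (hi : 1 ≤ i) (him : i ≤ 2 ^ (n + 1)) (hj : 1 ≤ j) (hjm : j ≤ 2 ^ n) :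
    wordAt i (2 ^ (n + 1)) ≠ wordAt (2 ^ (n + 1) + j) (2 ^ (n + 1)) := by
  intro heq
  rw [wordAt_eq_iff] at heq
  have e2 : 2 ^ (n + 1) = 2 * 2 ^ n := by ring
  obtain ⟨d, hd⟩ : ∃ d, 2 ^ (n + 1) + j = i + d := ⟨2 ^ (n + 1) + j - i, by omega⟩
  obtain ⟨e, c, hec⟩ := exists_two_pow_mul d (by omega)
  rw [hd] at heq
  by_cases hen : e < n
  · obtain ⟨h, hh, b, hb⟩ := exists_exact_pow e i
    have hle : 2 ^ (e + 2) ≤ 2 ^ (n + 1) := Nat.pow_le_pow_right (by norm_num) (by omega)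
    have := heq h (by omega)
    rw [show i + d + h = 2 ^ e * (2 * (2 * b + 1 + c) + 1) by
        rw [add_right_comm, hb, hec]; ring, hb, pd_two_pow_mul, pd_two_pow_mul] at this
    omega
  · -- Now `2^n ∣ d` and `1 ≤ d < 3 * 2^n`, and the letters at `2^(n+1)` and `2^(n+1) + d` differ.
    have hdvd : 2 ^ n ∣ d := hec ▸ (pow_dvd_pow 2 (by omega)).mul_right _
    obtain ⟨s, hs⟩ := hdvd
    have hs3 : s < 3 := by
      by_contra! h3
      nlinarith
    have := heq (2 ^ (n + 1) - i) (by omega)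
    rw [show i + (2 ^ (n + 1) - i) = 2 ^ n * 2 by omega,
      show i + d + (2 ^ (n + 1) - i) = 2 ^ n * (2 + s) by rw [mul_add, ← hs]; omega,
      pd_two_pow_mul_eq _ _ (by omega), pd_two_pow_mul_eq _ _ (by omega)] at this
    have p2 : pd 2 = 1 := by simpa using pd_two_pow_mul 1 0
    have p3 : pd 3 = 0 := pd_odd 1
    have p4 : pd 4 = 0 := by simpa using pd_two_pow_mul 2 0
    interval_cases s
    · omega
    · rw [p2, p3] at this; omega
    · rw [p2, p4] at this; omega

theorem pd_words_in_concatenations (k m : ℕ) (hk : 1 ≤ k) (hm : m = 2 ^ k) (v : List ℕ)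
    (hv : Allowed m v) :
    Xor'
      (∃ i, 1 ≤ i ∧ i ≤ m ∧
        v = ((substWord^[k] [0] ++ substWord^[k] [1]).drop (i - 1)).take m)
      (∃ i, 1 ≤ i ∧ i ≤ m / 2 ∧
        v = ((substWord^[k] [1] ++ substWord^[k] [0]).drop (i - 1)).take m) := by
  obtain ⟨n, rfl⟩ : ∃ n, k = n + 1 := ⟨k - 1, by omega⟩
  have e2 : 2 ^ (n + 1) = 2 * 2 ^ n := by ring
  have hhalf : m / 2 = 2 ^ n := by omega
  have h1 : ∀ i, 1 ≤ i → i ≤ m →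
      ((substWord^[n + 1] [0] ++ substWord^[n + 1] [1]).drop (i - 1)).take m = wordAt i m := by
    intro i hi him
    rw [concat_zero_one, wordAt_drop_take _ _ _ _ (by omega), Nat.add_sub_cancel' hi]
  have h2 : ∀ i, 1 ≤ i → i ≤ m →
      ((substWord^[n + 1] [1] ++ substWord^[n + 1] [0]).drop (i - 1)).take m
        = wordAt (m + i) m := by
    intro i hi him
    rw [concat_one_zero, wordAt_drop_take _ _ _ _ (by omega), hm]
    congr 1
    omega
  refine (xor_iff_or_and_not_and _ _).mpr ?_
  constructor
  · obtain ⟨p, hp, rfl⟩ := hv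
    obtain ⟨q, i, hi, him, rfl⟩ : ∃ q i, 1 ≤ i ∧ i ≤ m ∧ p = m * q + i := by
      have hlt := Nat.mod_lt (p - 1) (show m > 0 by rw [hm]; positivity)
      have hdiv := Nat.div_add_mod (p - 1) m
      exact ⟨(p - 1) / m, (p - 1) % m + 1, by omega, by omega, by omega⟩
    have hq := pd_lt (q + 1)
    have hq' : pd (q + 1) = 0 ∨ pd (q + 1) = 1 := by omega
    rcases hq' with hq0 | hq1
    · refine Or.inl ⟨i, hi, him, ?_⟩
      rw [h1 i hi him, hm]
      simpa using wordAt_congr (n + 1) i q 0 hi (by omega) (by rw [hq0]; simp [pd])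
    · have hc : wordAt (m * q + i) m = wordAt (m + i) m := by
        rw [hm]
        simpa using wordAt_congr (n + 1) i q 1 hi (by omega) (by rw [hq1]; simp [pd])
      right
      by_cases hi2 : i ≤ m / 2
      · exact ⟨i, hi, hi2, by rw [h2 i hi him, hc]⟩
      · refine ⟨i - m / 2, by omega, by omega, ?_⟩
        rw [h2 _ (by omega) (by omega), hc]
        have := wordAt_half_shift n (i - m / 2) (by omega) (by omega)
        rw [← hm] at this
        rw [← this]
        congr 1
        omega
  · rintro ⟨⟨i, hi, him, hvi⟩, ⟨j, hj, hjm, hvj⟩⟩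
    rw [h1 i hi him] at hvi
    rw [h2 j hj (by omega)] at hvj
    refine wordAt_ne n i j hi (by omega) hj (by omega) ?_
    rw [← hm, ← hvi, ← hvj]
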